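/- Let p > 2 be prime, let g be a primitive root modulo p, and let a ≥ 0, r > 0, N > 0 be integers such that the arithmetic progression J = {a + r, a + 2r, …, a + Nr} is contained in [1, p−1]. Let M(g) = { log_g(a + jr)/(p−1) : 1 ≤ j ≤ N } ⊆ [0,1]. Then there exists an absolute constant c₂ > 0 (independent of p, g, a, r, N) such that the extreme discrepancy D(M(g)) := (1/card(M(g))) · sup_{0 ≤ α ≤ β ≤ 1} |D(M(g); α, β)| satisfies D(M(g)) ≤ (c₂ / card(M(g))) · p^{1/2} · (log p)². -/

import Mathlib

open scoped Classical

/-!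
The count is a number of solutions of `a + j r = g ^ n` in `ZMod p`, with `j ≤ N` and `n` in an
interval of exponents modulo `q = p - 1`, so it can be estimated by completing both ranges.

The single analytic tool is the Pólya–Vinogradov completion lemma `completion`: if all nonzero
Fourier coefficients of `f : ZMod m → ℂ` have norm at most `M`, then the sum of `f` over `L`
consecutive residues is `(L / m) ∑ f + O(M log m)`. It follows from Fourier inversion and
`∑_{t ≠ 0} |∑_{i < L} e(t i / m)| ≤ m (1 + log m)`.

It is used twice.
* On `ZMod q`, with `f n = e(u g ^ n / p)` for `u ≠ 0`. The Fourier coefficients are Gauss sums, of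
  norm at most `√p` (`norm_gauss_le`). Hence the sums of `e(u g ^ n / p)` over an interval of
  exponents are `O(√p log p)` (`norm_expSum_le`).
* On `ZMod p`, with `f x` the number of exponents `n` in the interval such that `a + x r = g ^ n`.
  The nonzero Fourier coefficients are, up to a unimodular factor, the sums just estimated, so the
  count differs from its expected value `N L / p` by `O(√p log² p)` (`count_bound`), where `L` is
  the number of admissible exponents.

Replacing `N L / p` by `(β - α) N` introduces only a bounded error.
-/

/-! ### Completing incomplete sums over `ZMod m` -/

lemma norm_stdAddChar {m : ℕ} [NeZero m] (x : ZMod m) : ‖ZMod.stdAddChar x‖ = 1 := by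
  rw [ZMod.stdAddChar_apply]; exact Circle.norm_coe _

lemma norm_stdAddChar_sub_one {m : ℕ} [NeZero m] (t : ZMod m) :
    ‖ZMod.stdAddChar t - 1‖ = 2 * Real.sin (Real.pi * t.val / m) := by
  have hm : (0 : ℝ) < m := by exact_mod_cast Nat.pos_of_ne_zero (NeZero.ne m)
  have hlt : (t.val : ℝ) ≤ m := by exact_mod_cast (ZMod.val_lt t).le
  have h := ZMod.stdAddChar_coe (N := m) (t.val : ℤ)
  have h1 : (((t.val : ℕ) : ℤ) : ZMod m) = t := by simp
  rw [h1] at h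
  have h2 : (2 * Real.pi * Complex.I * ((t.val : ℤ) : ℂ) / m : ℂ)
      = Complex.I * ((2 * Real.pi * t.val / m : ℝ) : ℂ) := by
    push_cast; ring
  rw [h, h2, Complex.norm_exp_I_mul_ofReal_sub_one, Real.norm_eq_abs, abs_of_nonneg]
  · congr 2; ring
  · have : 0 ≤ Real.sin (2 * Real.pi * t.val / m / 2) := by
      apply Real.sin_nonneg_of_nonneg_of_le_pi
      · positivity
      · rw [show 2 * Real.pi * t.val / m / 2 = Real.pi * (t.val / m) by ring]
        exact mul_le_of_le_one_right Real.pi_pos.le ((div_le_one hm).2 hlt)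
    positivity

/-- The Dirichlet kernel is at most `1 / |sin (π t / m)|`, and Jordan's inequality bounds this by
`m / (2 min (t, m - t))`; the sum of the two reciprocals stands in for the minimum. -/
lemma norm_geom_sum_le {m : ℕ} [NeZero m] {t : ZMod m} (ht : t ≠ 0) (L : ℕ) :
    ‖∑ i ∈ Finset.range L, (ZMod.stdAddChar t) ^ i‖
      ≤ m / 2 * (1 / (t.val : ℝ) + 1 / ((m : ℝ) - t.val)) := by
  have hm : (0 : ℝ) < m := by exact_mod_cast Nat.pos_of_ne_zero (NeZero.ne m)
  have hlt : (t.val : ℝ) < m := by exact_mod_cast ZMod.val_lt t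
  have hpos : (0 : ℝ) < t.val := by
    exact_mod_cast Nat.pos_of_ne_zero (fun h => ht ((ZMod.val_eq_zero t).1 h))
  have hne : ZMod.stdAddChar t ≠ 1 := fun h => ht <| by
    rwa [← (ZMod.stdAddChar (N := m)).map_zero_eq_one, ZMod.injective_stdAddChar.eq_iff] at h
  rw [geom_sum_eq hne, norm_div, norm_stdAddChar_sub_one]
  have hnum : ‖ZMod.stdAddChar t ^ L - 1‖ ≤ 2 := by
    refine (norm_sub_le _ _).trans ?_
    rw [norm_pow, norm_stdAddChar]; norm_num
  have hpi := Real.pi_pos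
  rcases le_or_gt (2 * (t.val : ℝ)) m with h | h
  · have hs : 2 * (t.val : ℝ) / m ≤ Real.sin (Real.pi * t.val / m) := by
      have := Real.mul_le_sin (x := Real.pi * t.val / m) (by positivity) (by
        rw [div_le_iff₀ hm]; nlinarith)
      calc 2 * (t.val : ℝ) / m = 2 / Real.pi * (Real.pi * t.val / m) := by field_simp
        _ ≤ _ := this
    calc _ ≤ 2 / (2 * (2 * (t.val : ℝ) / m)) := by gcongr
      _ = m / 2 * (1 / (t.val : ℝ) + 0) := by field_simp; norm_num
      _ ≤ _ := by
        gcongr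
        exact div_nonneg zero_le_one (by linarith)
  · have hpos' : (0 : ℝ) < m - t.val := by linarith
    have hs : 2 * ((m : ℝ) - t.val) / m ≤ Real.sin (Real.pi * t.val / m) := by
      have := Real.mul_le_sin (x := Real.pi * (m - t.val) / m) (by positivity) (by
        rw [div_le_iff₀ hm]; nlinarith)
      rw [← Real.sin_pi_sub]
      calc 2 * ((m : ℝ) - t.val) / m = 2 / Real.pi * (Real.pi * (m - t.val) / m) := by field_simp
        _ ≤ _ := this
        _ = _ := by congr 1; field_simp
    calc _ ≤ 2 / (2 * (2 * ((m : ℝ) - t.val) / m)) := by gcongr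
      _ = m / 2 * (0 + 1 / ((m : ℝ) - t.val)) := by field_simp; norm_num
      _ ≤ _ := by gcongr; positivity

/-- The bounds of `norm_geom_sum_le` sum to `m` times a harmonic number, because `t ↦ m - t`
permutes the nonzero residues. -/
lemma sum_inv_val_le (m : ℕ) [NeZero m] :
    ∑ t ∈ (Finset.univ : Finset (ZMod m)).erase 0,
      (m / 2 * (1 / (t.val : ℝ) + 1 / ((m : ℝ) - t.val))) ≤ m * (1 + Real.log m) := by
  have hm0 : 0 < m := Nat.pos_of_ne_zero (NeZero.ne m)
  have e1 : ∑ t ∈ (Finset.univ : Finset (ZMod m)).erase 0,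
      (m / 2 * (1 / (t.val : ℝ) + 1 / ((m : ℝ) - t.val)))
      = ∑ k ∈ Finset.range (m - 1),
        (m / 2 * (1 / ((k + 1 : ℕ) : ℝ) + 1 / ((m : ℝ) - (k + 1 : ℕ)))) := by
    symm
    refine Finset.sum_nbij' (fun k => ((k + 1 : ℕ) : ZMod m)) (fun t => t.val - 1) ?_ ?_ ?_ ?_ ?_
    · intro k hk
      have hk : k + 1 < m := by have := Finset.mem_range.1 hk; omega
      simp only [Finset.mem_erase, Finset.mem_univ, and_true]
      intro h
      have := congrArg ZMod.val h
      rw [ZMod.val_natCast_of_lt hk] at this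
      simp only [ZMod.val_zero] at this
      omega
    · intro t ht
      have h1 := ZMod.val_lt t
      have : t.val ≠ 0 := fun h => (Finset.mem_erase.1 ht).1 ((ZMod.val_eq_zero t).1 h)
      rw [Finset.mem_range]; omega
    · intro k hk
      have hk : k + 1 < m := by have := Finset.mem_range.1 hk; omega
      rw [ZMod.val_natCast_of_lt hk]; omega
    · intro t ht
      have : t.val ≠ 0 := fun h => (Finset.mem_erase.1 ht).1 ((ZMod.val_eq_zero t).1 h)
      rw [show t.val - 1 + 1 = t.val by omega]; simp
    · intro k hk
      have hk : k + 1 < m := by have := Finset.mem_range.1 hk; omega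
      rw [ZMod.val_natCast_of_lt hk]
  have e2 : ∑ k ∈ Finset.range (m - 1), 1 / ((m : ℝ) - (k + 1 : ℕ))
      = ∑ k ∈ Finset.range (m - 1), 1 / ((k + 1 : ℕ) : ℝ) := by
    rw [← Finset.sum_range_reflect]
    refine Finset.sum_congr rfl fun k hk => ?_
    have hk := Finset.mem_range.1 hk
    congr 1
    rw [show m - 1 - 1 - k + 1 = m - (k + 1) by omega, Nat.cast_sub (by omega)]
    ring
  have e3 : ∑ k ∈ Finset.range (m - 1), 1 / ((k + 1 : ℕ) : ℝ) ≤ 1 + Real.log m := by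
    have h := harmonic_le_one_add_log m
    rw [harmonic] at h
    push_cast at h
    refine le_trans ?_ h
    simp only [one_div, Nat.cast_add, Nat.cast_one]
    exact Finset.sum_le_sum_of_subset_of_nonneg (Finset.range_mono (by omega))
      (fun i _ _ => by positivity)
  rw [e1, ← Finset.mul_sum, Finset.sum_add_distrib, e2]
  have : (0 : ℝ) ≤ m := Nat.cast_nonneg m
  nlinarith

/-- **Completion.** If the Fourier coefficients of `f` at all nonzero frequencies are at most `M` in
norm, the sum of `f` over `L` consecutive residues is close to `L / m` times its full sum. The
estimate is multiplied through by `m`. No bound on `L` is needed. -/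
lemma completion {m : ℕ} [NeZero m] (f : ZMod m → ℂ) {M : ℝ} (hM' : 0 ≤ M)
    (hM : ∀ t : ZMod m, t ≠ 0 → ‖∑ x, f x * ZMod.stdAddChar (t * x)‖ ≤ M) (A L : ℕ) :
    ‖(m : ℂ) * ∑ i ∈ Finset.range L, f ((A + i : ℕ) : ZMod m) - L * ∑ x, f x‖
      ≤ M * (m * (1 + Real.log m)) := by
  -- Fourier inversion, with the frequency `t = 0` giving the main term
  have inv : (m : ℂ) * ∑ i ∈ Finset.range L, f ((A + i : ℕ) : ZMod m)
      = ∑ t : ZMod m, (∑ x, f x * ZMod.stdAddChar (t * x)) *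
          ∑ i ∈ Finset.range L, ZMod.stdAddChar (-(t * ((A + i : ℕ) : ZMod m))) := by
    have h1 : ∀ t : ZMod m, (∑ x, f x * ZMod.stdAddChar (t * x)) *
          ∑ i ∈ Finset.range L, ZMod.stdAddChar (-(t * ((A + i : ℕ) : ZMod m)))
        = ∑ i ∈ Finset.range L, ∑ x,
            f x * ZMod.stdAddChar (t * (x - ((A + i : ℕ) : ZMod m))) := by
      intro t
      rw [Finset.mul_sum]
      refine Finset.sum_congr rfl fun i _ => ?_
      rw [Finset.sum_mul]
      refine Finset.sum_congr rfl fun x _ => ?_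
      rw [mul_sub, sub_eq_add_neg, AddChar.map_add_eq_mul]; ring
    rw [Finset.sum_congr rfl fun t _ => h1 t, Finset.sum_comm, Finset.mul_sum]
    refine Finset.sum_congr rfl fun i _ => ?_
    rw [Finset.sum_comm]
    simp_rw [← Finset.mul_sum, AddChar.sum_mulShift _ (ZMod.isPrimitive_stdAddChar m), sub_eq_zero]
    simp [ZMod.card, mul_comm]
  rw [inv, ← Finset.add_sum_erase _ _ (Finset.mem_univ (0 : ZMod m))]
  have h0 : (∑ x, f x * ZMod.stdAddChar ((0 : ZMod m) * x)) *
          ∑ i ∈ Finset.range L, ZMod.stdAddChar (-((0 : ZMod m) * ((A + i : ℕ) : ZMod m)))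
        = L * ∑ x, f x := by
    simp [mul_comm]
  rw [h0, add_sub_cancel_left]
  have hM0 : ∀ t ∈ (Finset.univ : Finset (ZMod m)).erase 0,
      ‖(∑ x, f x * ZMod.stdAddChar (t * x)) *
          ∑ i ∈ Finset.range L, ZMod.stdAddChar (-(t * ((A + i : ℕ) : ZMod m)))‖
      ≤ M * (m / 2 * (1 / (t.val : ℝ) + 1 / ((m : ℝ) - t.val))) := by
    intro t ht
    have ht := (Finset.mem_erase.1 ht).1
    have hk : ‖∑ i ∈ Finset.range L, ZMod.stdAddChar (-(t * ((A + i : ℕ) : ZMod m)))‖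
        ≤ m / 2 * (1 / (t.val : ℝ) + 1 / ((m : ℝ) - t.val)) := by
      refine le_trans (le_of_eq ?_) (norm_geom_sum_le ht L)
      have : ∀ i ∈ Finset.range L, ZMod.stdAddChar (-(t * ((A + i : ℕ) : ZMod m)))
          = ZMod.stdAddChar (-(t * (A : ZMod m))) * (starRingEnd ℂ) (ZMod.stdAddChar t ^ i) := by
        intro i _
        rw [← AddChar.map_nsmul_eq_pow, ← AddChar.map_neg_eq_conj, ← AddChar.map_add_eq_mul]
        congr 1
        push_cast; rw [nsmul_eq_mul]; ring
      rw [Finset.sum_congr rfl this, ← Finset.mul_sum, ← map_sum, norm_mul, norm_stdAddChar,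
        one_mul, RCLike.norm_conj]
    rw [norm_mul]
    exact mul_le_mul (hM t ht) hk (norm_nonneg _) hM'
  refine (norm_sum_le_of_le _ hM0).trans ?_
  rw [← Finset.mul_sum]
  exact mul_le_mul_of_nonneg_left (sum_inv_val_le m) hM'

/-! ### Exponential sums over powers of a primitive root -/

lemma pow_val_natCast {p q : ℕ} [NeZero q] {g : ZMod p} (hg : g ^ q = 1) (k : ℕ) :
    g ^ ((k : ZMod q)).val = g ^ k := by
  rw [ZMod.val_natCast, ← pow_eq_pow_mod _ hg]

lemma pow_val_add {p q : ℕ} [NeZero q] {g : ZMod p} (hg : g ^ q = 1) (n k : ZMod q) :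
    g ^ (n + k).val = g ^ n.val * g ^ k.val := by
  rw [ZMod.val_add, ← pow_eq_pow_mod _ hg, pow_add]

/-- The Gauss sum bound, with the multiplicative character written as `g ^ n ↦ e(s n / q)`. The norm
`‖G u‖` is unchanged when `u` is multiplied by a power of `g`, while orthogonality gives
`∑ u, ‖G u‖ ^ 2 = p q`; so the `q` values `t g ^ k` each carry at most `p`. This only needs `g` to
have order exactly `q`, and includes the case `s = 0`. -/
lemma norm_gauss_le {p q : ℕ} [Fact p.Prime] [NeZero q] {g : ZMod p}
    (hg : IsPrimitiveRoot g q) {t : ZMod p} (ht : t ≠ 0) (s : ZMod q) :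
    ‖∑ n : ZMod q, ZMod.stdAddChar (t * g ^ n.val) * ZMod.stdAddChar (s * n)‖ ≤ √p := by
  set G : ZMod p → ℂ := fun u =>
    ∑ n : ZMod q, ZMod.stdAddChar (u * g ^ n.val) * ZMod.stdAddChar (s * n) with hG
  have hq : (0 : ℝ) < q := by exact_mod_cast Nat.pos_of_ne_zero (NeZero.ne q)
  have hinj : ∀ n k : ZMod q, g ^ n.val = g ^ k.val → n = k := fun n k h =>
    ZMod.val_injective q (hg.pow_inj (ZMod.val_lt n) (ZMod.val_lt k) h)
  have shift : ∀ k : ZMod q, ‖G (t * g ^ k.val)‖ = ‖G t‖ := by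
    intro k
    have : G (t * g ^ k.val) = ZMod.stdAddChar (-(s * k)) * G t := by
      simp only [hG]
      rw [Finset.mul_sum, ← Equiv.sum_comp (Equiv.addLeft k)
        (fun n => ZMod.stdAddChar (-(s * k)) *
          (ZMod.stdAddChar (t * g ^ n.val) * ZMod.stdAddChar (s * n)))]
      refine Finset.sum_congr rfl fun n _ => ?_
      rw [Equiv.coe_addLeft, pow_val_add hg.pow_eq_one, mul_left_comm, ← AddChar.map_add_eq_mul]
      congr 2 <;> ring
    rw [this, norm_mul, norm_stdAddChar, one_mul]
  have total : ∑ u : ZMod p, ‖G u‖ ^ 2 = p * q := by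
    have : ∑ u : ZMod p, G u * (starRingEnd ℂ) (G u) = (p * q : ℂ) := by
      have h1 : ∀ u : ZMod p, G u * (starRingEnd ℂ) (G u) = ∑ n : ZMod q, ∑ k : ZMod q,
          ZMod.stdAddChar (s * n - s * k) * ZMod.stdAddChar (u * (g ^ n.val - g ^ k.val)) := by
        intro u
        simp only [hG]
        rw [map_sum, Finset.sum_mul_sum]
        refine Finset.sum_congr rfl fun n _ => Finset.sum_congr rfl fun k _ => ?_
        rw [map_mul (starRingEnd ℂ), ← AddChar.map_neg_eq_conj, ← AddChar.map_neg_eq_conj, mul_sub,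
          sub_eq_add_neg, sub_eq_add_neg, AddChar.map_add_eq_mul, AddChar.map_add_eq_mul]
        ring
      rw [Finset.sum_congr rfl fun u _ => h1 u, Finset.sum_comm]
      have h2 : ∀ n : ZMod q, ∑ u : ZMod p, ∑ k : ZMod q,
          ZMod.stdAddChar (s * n - s * k) * ZMod.stdAddChar (u * (g ^ n.val - g ^ k.val))
          = (p : ℂ) := by
        intro n
        rw [Finset.sum_comm]
        simp_rw [← Finset.mul_sum, AddChar.sum_mulShift _ (ZMod.isPrimitive_stdAddChar p),
          sub_eq_zero]
        rw [Finset.sum_eq_single n]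
        · simp [ZMod.card]
        · intro k _ hk
          rw [if_neg fun h => hk (hinj _ _ h).symm]; simp
        · simp
      rw [Finset.sum_congr rfl fun n _ => h2 n]
      simp [ZMod.card, mul_comm]
    have h3 : ((∑ u : ZMod p, ‖G u‖ ^ 2 : ℝ) : ℂ) = ((p * q : ℝ) : ℂ) := by
      push_cast
      rw [← this]
      refine Finset.sum_congr rfl fun u _ => ?_
      rw [Complex.mul_conj, Complex.normSq_eq_norm_sq]; push_cast; rfl
    exact_mod_cast h3
  have hle : q * ‖G t‖ ^ 2 ≤ p * q := by
    rw [← total]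
    calc q * ‖G t‖ ^ 2 = ∑ k : ZMod q, ‖G (t * g ^ k.val)‖ ^ 2 := by
          simp [shift, ZMod.card]
      _ = ∑ u ∈ Finset.univ.image (fun k : ZMod q => t * g ^ k.val), ‖G u‖ ^ 2 := by
          rw [Finset.sum_image]
          intro n _ k _ h
          exact hinj _ _ (mul_left_cancel₀ ht h)
      _ ≤ ∑ u : ZMod p, ‖G u‖ ^ 2 :=
          Finset.sum_le_univ_sum_of_nonneg fun u => by positivity
  apply Real.le_sqrt_of_sq_le
  show ‖G t‖ ^ 2 ≤ p
  nlinarith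

/-- Incomplete exponential sums over consecutive powers of `g`, by completion modulo `q`. The main
term `(L / q) ∑ n, e(t g ^ n / p)` is itself at most `√p`, the Gauss sum at `s = 0`. -/
lemma norm_expSum_le {p q : ℕ} [Fact p.Prime] [NeZero q] {g : ZMod p}
    (hg : IsPrimitiveRoot g q) {t : ZMod p} (ht : t ≠ 0) (A : ℕ) {L : ℕ} (hL : L ≤ q) :
    ‖∑ i ∈ Finset.range L, ZMod.stdAddChar (t * g ^ (A + i))‖ ≤ √p * (2 + Real.log q) := by
  have hq : (0 : ℝ) < q := by exact_mod_cast Nat.pos_of_ne_zero (NeZero.ne q)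
  have hL' : (L : ℝ) ≤ q := by exact_mod_cast hL
  have h := completion (fun n : ZMod q => ZMod.stdAddChar (t * g ^ n.val)) (Real.sqrt_nonneg p)
    (fun s _ => norm_gauss_le hg ht s) A L
  have h0 := norm_gauss_le hg ht (0 : ZMod q)
  simp only [zero_mul, AddChar.map_zero_eq_one, mul_one] at h0
  simp only [pow_val_natCast hg.pow_eq_one] at h
  set S := ∑ i ∈ Finset.range L, ZMod.stdAddChar (t * g ^ (A + i))
  set T := ∑ n : ZMod q, ZMod.stdAddChar (t * g ^ n.val)
  have h1 : ‖(q : ℂ) * S‖ ≤ √p * (q * (1 + Real.log q)) + q * √p := by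
    calc ‖(q : ℂ) * S‖ = ‖(q * S - L * T) + L * T‖ := by ring_nf
      _ ≤ _ := norm_add_le _ _
      _ ≤ _ := by
        refine add_le_add h ?_
        rw [norm_mul, Complex.norm_natCast]
        exact mul_le_mul hL' h0 (norm_nonneg _) hq.le
  rw [norm_mul, Complex.norm_natCast] at h1
  refine le_of_mul_le_mul_left (h1.trans (le_of_eq ?_)) hq
  ring

/-! ### Counting points of the progression -/

/-- The number of pairs `(j, i)` with `j < N`, `i < L` and `a + (1 + j) r = g ^ (A + i)` is close to
`N L / p`, by completion modulo `p`; the estimate is multiplied through by `p`. -/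
lemma count_bound {p q : ℕ} [Fact p.Prime] [NeZero q] {g : ZMod p}
    (hg : IsPrimitiveRoot g q) (a : ZMod p) {r : ZMod p} (hr : r ≠ 0) (A : ℕ) {L : ℕ}
    (hL : L ≤ q) (N : ℕ) :
    |(p : ℝ) * ∑ j ∈ Finset.range N, (((Finset.range L).filter
        fun i => a + ((1 + j : ℕ) : ZMod p) * r = g ^ (A + i)).card : ℝ) - N * L|
      ≤ √p * (2 + Real.log q) * (p * (1 + Real.log p)) := by
  have hlog : 0 ≤ Real.log q := Real.log_natCast_nonneg q
  set f : ZMod p → ℂ := fun x =>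
    (((Finset.range L).filter fun i => a + x * r = g ^ (A + i)).card : ℂ) with hf
  -- the weight `f` is the sum of the point masses at `(g ^ (A + i) - a) / r`
  have key : ∀ h : ZMod p → ℂ, ∑ x, f x * h x
      = ∑ i ∈ Finset.range L, h ((g ^ (A + i) - a) * r⁻¹) := by
    intro h
    have : ∀ x, f x * h x
        = ∑ i ∈ Finset.range L, if x = (g ^ (A + i) - a) * r⁻¹ then h x else 0 := by
      intro x
      have : ∀ i, (a + x * r = g ^ (A + i)) ↔ x = (g ^ (A + i) - a) * r⁻¹ := by
        intro i
        rw [eq_mul_inv_iff_mul_eq₀ hr, eq_sub_iff_add_eq, add_comm]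
      simp only [hf, this]
      rw [← Finset.sum_filter, Finset.sum_const, nsmul_eq_mul]
    rw [Finset.sum_congr rfl fun x _ => this x, Finset.sum_comm]
    refine Finset.sum_congr rfl fun i _ => ?_
    simp
  have hsum : ∑ x, f x = L := by
    have := key fun _ => 1
    simpa using this
  have hF : ∀ t : ZMod p, t ≠ 0 →
      ‖∑ x, f x * ZMod.stdAddChar (t * x)‖ ≤ √p * (2 + Real.log q) := by
    intro t ht
    rw [key fun x => ZMod.stdAddChar (t * x)]
    have : ∀ i ∈ Finset.range L, ZMod.stdAddChar (t * ((g ^ (A + i) - a) * r⁻¹))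
        = ZMod.stdAddChar (-(t * a * r⁻¹)) * ZMod.stdAddChar (t * r⁻¹ * g ^ (A + i)) := by
      intro i _
      rw [← AddChar.map_add_eq_mul]; congr 1; ring
    rw [Finset.sum_congr rfl this, ← Finset.mul_sum, norm_mul, norm_stdAddChar, one_mul]
    exact norm_expSum_le hg (mul_ne_zero ht (inv_ne_zero hr)) A hL
  have h := completion f (by positivity) hF 1 N
  rw [hsum] at h
  refine le_trans (le_of_eq ?_) h
  rw [← Real.norm_eq_abs, ← Complex.norm_real]
  congr 1
  simp only [hf]
  push_cast
  rfl

/-- **Theorem 1, inequality (2).**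
Let `p > 2` be prime, `g` a primitive root modulo `p`, and `a ≥ 0`, `r > 0`, `N > 0`
integers such that the progression `J = {a + r, …, a + Nr}` is contained in `[1, p-1]`.
With `M(g) = { log_g(a + jr)/(p-1) : 1 ≤ j ≤ N }` (of cardinality `N`), there is an
absolute constant `c₂ > 0` such that the extreme discrepancy
`D(M(g)) = (1/card M(g)) ⬝ sup_{0 ≤ α ≤ β ≤ 1} |D(M(g); α, β)|` satisfies
`D(M(g)) ≤ (c₂ / card M(g)) √p (log p)²`; equivalently, the bound holds for every
admissible pair `(α, β)`. -/
theorem extreme_discrepancy_bound :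
    ∃ c₂ : ℝ, 0 < c₂ ∧
      ∀ (p : ℕ), p.Prime → 2 < p →
      ∀ (g : ℕ), IsPrimitiveRoot (g : ZMod p) (p - 1) →
      ∀ (a r N : ℕ), 0 < r → 0 < N →
      (∀ j : ℕ, 1 ≤ j → j ≤ N → 1 ≤ a + j * r ∧ a + j * r ≤ p - 1) →
      ∀ (dlog : ℕ → ℕ),
      (∀ z : ℕ, 1 ≤ z → z ≤ p - 1 →
        dlog z ≤ p - 2 ∧ (g : ZMod p) ^ dlog z = (z : ZMod p)) →
      ∀ (α β : ℝ), 0 ≤ α → α ≤ β → β ≤ 1 →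
      (1 / (N : ℝ)) *
        |((((Finset.Icc 1 N).filter (fun j : ℕ =>
              α ≤ (dlog (a + j * r) : ℝ) / ((p : ℝ) - 1) ∧
              (dlog (a + j * r) : ℝ) / ((p : ℝ) - 1) ≤ β)).card : ℝ)
            - (β - α) * (N : ℝ))| ≤
        (c₂ / (N : ℝ)) * Real.sqrt p * (Real.log p) ^ 2 := by
  refine ⟨9, by norm_num, ?_⟩
  intro p hp hp2 g hg a r N hr hN hJ dlog hdlog α β hα hαβ hβ
  have : Fact p.Prime := ⟨hp⟩
  obtain ⟨q, rfl⟩ : ∃ q, p = q + 1 := ⟨p - 1, by omega⟩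
  rw [Nat.add_sub_cancel] at hg
  have : NeZero q := ⟨by omega⟩
  have hq : (0 : ℝ) < q := by exact_mod_cast (by omega : 0 < q)
  have hN' : (0 : ℝ) < N := by exact_mod_cast hN
  have hNp : N ≤ q := by
    have := (hJ N hN le_rfl).2
    have : N * 1 ≤ N * r := Nat.mul_le_mul_left _ hr
    omega
  -- `a + r ≤ p - 1` forces `r < p`, which matters when `N = 1`
  have hrp : (r : ZMod (q + 1)) ≠ 0 := by
    intro h
    have h1 := Nat.le_of_dvd hr ((ZMod.natCast_eq_zero_iff _ _).1 h)
    have := (hJ 1 le_rfl hN).2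
    omega
  have hpq : ((q + 1 : ℕ) : ℝ) - 1 = q := by push_cast; ring
  rw [hpq]
  -- the admissible exponents are `A ≤ n < U`; the cap at `q` matters only when `β = 1`, since
  -- discrete logarithms are at most `q - 1`
  set A := ⌈α * q⌉₊ with hA
  set U := min (⌊β * q⌋₊ + 1) q with hU
  set L := U - A with hL
  have hUq : U ≤ q := min_le_right _ _
  -- the number of exponents lying in `[α q, β q]` is within `1` of `(β - α) q`
  have hLr : |(L : ℝ) - (β - α) * q| ≤ 1 := by
    have a1 : α * q ≤ A := Nat.le_ceil _
    have a2 : (A : ℝ) < α * q + 1 := Nat.ceil_lt_add_one (by positivity)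
    have u1 : β * q ≤ U := by
      rw [hU, Nat.cast_min]
      refine le_min ?_ (mul_le_of_le_one_left hq.le hβ)
      push_cast
      exact (Nat.lt_floor_add_one _).le
    have u2 : (U : ℝ) ≤ β * q + 1 := by
      have h1 : (U : ℝ) ≤ ((⌊β * q⌋₊ + 1 : ℕ) : ℝ) := by exact_mod_cast min_le_left _ _
      have h2 := Nat.floor_le (mul_nonneg (hα.trans hαβ) hq.le)
      push_cast at h1
      linarith
    have hle : A ≤ U := by
      have h1 : α * q ≤ β * q := mul_le_mul_of_nonneg_right hαβ hq.le
      have h2 : (A : ℝ) < (U + 1 : ℕ) := by push_cast; linarith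
      have := Nat.cast_lt.1 h2
      omega
    rw [hL, Nat.cast_sub hle, abs_le]
    constructor <;> linarith
  have hcount : (((Finset.Icc 1 N).filter (fun j : ℕ =>
              α ≤ (dlog (a + j * r) : ℝ) / (q : ℝ) ∧
              (dlog (a + j * r) : ℝ) / (q : ℝ) ≤ β)).card : ℝ)
      = ∑ j ∈ Finset.range N, (((Finset.range L).filter
        fun i => (a : ZMod (q + 1)) + ((1 + j : ℕ) : ZMod (q + 1)) * r
          = (g : ZMod (q + 1)) ^ (A + i)).card : ℝ) := by
    have e : Finset.Icc 1 N = Finset.Ico 1 (N + 1) := by ext; simp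
    rw [Finset.card_filter, Nat.cast_sum, e, Finset.sum_Ico_eq_sum_range, Nat.add_sub_cancel]
    refine Finset.sum_congr rfl fun j hj => ?_
    congr 1
    have hj := Finset.mem_range.1 hj
    have hz := hJ (1 + j) (by omega) (by omega)
    obtain ⟨hd1, hd2⟩ := hdlog _ hz.1 hz.2
    set n := dlog (a + (1 + j) * r) with hn
    have hnq : n < q := by omega
    have hiff : (α ≤ (n : ℝ) / q ∧ (n : ℝ) / q ≤ β) ↔ (A ≤ n ∧ n < U) := by
      rw [le_div_iff₀ hq, div_le_iff₀ hq, hA, Nat.ceil_le, hU, lt_min_iff, Nat.lt_succ_iff,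
        Nat.le_floor_iff (mul_nonneg (hα.trans hαβ) hq.le)]
      tauto
    have hmem : ∀ i ∈ Finset.range L, ((a : ZMod (q + 1)) + ((1 + j : ℕ) : ZMod (q + 1)) * r
          = (g : ZMod (q + 1)) ^ (A + i)) ↔ n = A + i := by
      intro i hi
      have hi := Finset.mem_range.1 hi
      have hc : (a : ZMod (q + 1)) + ((1 + j : ℕ) : ZMod (q + 1)) * r
          = (g : ZMod (q + 1)) ^ n := by rw [hd2]; push_cast; ring
      rw [hc]
      exact ⟨fun h => hg.pow_inj hnq (by omega) h, fun h => by rw [h]⟩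
    rw [Finset.filter_congr hmem]
    by_cases hc : A ≤ n ∧ n < U
    · rw [if_pos (hiff.2 hc)]
      symm
      rw [Finset.card_eq_one]
      refine ⟨n - A, ?_⟩
      ext i
      simp only [Finset.mem_filter, Finset.mem_range, Finset.mem_singleton]
      omega
    · rw [if_neg (fun h => hc (hiff.1 h))]
      symm
      rw [Finset.card_eq_zero, Finset.filter_eq_empty_iff]
      intro i hi h
      have hi := Finset.mem_range.1 hi
      omega
  have hmain := count_bound hg (a : ZMod (q + 1)) hrp A (L := L) (by omega) N
  rw [← hcount] at hmain
  set C := (((Finset.Icc 1 N).filter (fun j : ℕ =>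
              α ≤ (dlog (a + j * r) : ℝ) / (q : ℝ) ∧
              (dlog (a + j * r) : ℝ) / (q : ℝ) ≤ β)).card : ℝ) with hC
  set P : ℝ := ((q + 1 : ℕ) : ℝ) with hP
  have hPq : P = q + 1 := by rw [hP]; push_cast; ring
  have hP0 : 0 < P := by linarith
  have hlog1 : 1 ≤ Real.log P := by
    rw [Real.le_log_iff_exp_le hP0]
    have h3 : (3 : ℝ) ≤ P := by rw [hP]; exact_mod_cast hp2
    linarith [Real.exp_one_lt_d9]
  have hlogq : Real.log q ≤ Real.log P := Real.log_le_log hq (by linarith)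
  have hs : 1 ≤ √P := Real.one_le_sqrt.2 (by linarith)
  have hNq : (N : ℝ) ≤ q := by exact_mod_cast hNp
  have hlq0 : 0 ≤ Real.log q := Real.log_natCast_nonneg q
  have hb1 : √P * (2 + Real.log q) * (P * (1 + Real.log P))
      ≤ P * (6 * (√P * Real.log P ^ 2)) := by
    calc √P * (2 + Real.log q) * (P * (1 + Real.log P))
        ≤ √P * (3 * Real.log P) * (P * (2 * Real.log P)) := by
          gcongr <;> linarith
      _ = _ := by ring
  -- replacing `N L / p` by `(β - α) N` costs at most `2`
  have hb2 : |(N : ℝ) * L - P * ((β - α) * N)| ≤ P * 2 := by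
    have : (N : ℝ) * L - P * ((β - α) * N)
        = N * (L - (β - α) * q) - (β - α) * N := by rw [hPq]; ring
    rw [this]
    have h1 : |(N : ℝ) * (L - (β - α) * q)| ≤ N := by
      rw [abs_mul, abs_of_pos hN']
      exact mul_le_of_le_one_right hN'.le hLr
    have h2 : |(β - α) * N| ≤ N := by
      rw [abs_mul, abs_of_pos hN', abs_of_nonneg (by linarith)]
      exact mul_le_of_le_one_left hN'.le (by linarith)
    refine (abs_sub _ _).trans ?_
    linarith
  have hfin : |C - (β - α) * N| ≤ 9 * √P * Real.log P ^ 2 := by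
    have h1 : P * |C - (β - α) * N| ≤ P * (6 * (√P * Real.log P ^ 2)) + P * 2 := by
      rw [← abs_of_pos hP0, ← abs_mul, abs_of_pos hP0]
      calc |P * (C - (β - α) * N)|
          = |(P * C - N * L) + (N * L - P * ((β - α) * N))| := by congr 1; ring
        _ ≤ _ := abs_add_le _ _
        _ ≤ _ := add_le_add (hmain.trans hb1) hb2
    have h2 : |C - (β - α) * N| ≤ 6 * (√P * Real.log P ^ 2) + 2 := by
      refine le_of_mul_le_mul_left (h1.trans (le_of_eq ?_)) hP0
      ring
    have h3 : 1 ≤ √P * Real.log P ^ 2 := one_le_mul_of_one_le_of_one_le hs (one_le_pow₀ hlog1)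
    linarith
  calc 1 / (N : ℝ) * |C - (β - α) * N| ≤ 1 / (N : ℝ) * (9 * √P * Real.log P ^ 2) := by gcongr
    _ = _ := by ring
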